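/- Summing the jacket face counts over all cyclic permutations of the colors recovers the total face count: for any (D+1)-tuple σ of permutations of {1,…,k}, Σ_π F_π(σ) = 2·(D−1)!·F(σ), where the sum runs over all D! cyclic permutations π of the color set {0,1,…,D}. -/

import Mathlib

/-- Number of cycles of a permutation counting fixed points: the number of orbits
on `Fin k` of the cyclic group generated by `τ`. -/
noncomputable def cycleCount {k : ℕ} (τ : Equiv.Perm (Fin k)) : ℕ :=
  Nat.card (MulAction.orbitRel.Quotient (Subgroup.zpowers τ) (Fin k))

/-- Total number of faces of the `(D+1)`-colored graph encoded by `σ`: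
`F(σ) = Σ_{c₁ < c₂} c(σ⁽ᶜ¹⁾ ∘ (σ⁽ᶜ²⁾)⁻¹)`. -/
noncomputable def faceCount {k D : ℕ} (σ : Fin (D + 1) → Equiv.Perm (Fin k)) : ℕ :=
  ∑ p ∈ Finset.univ.filter (fun p : Fin (D + 1) × Fin (D + 1) => p.1 < p.2),
    cycleCount (σ p.1 * (σ p.2)⁻¹)

/-- Number of connected components of the `(D+1)`-colored graph encoded by `σ`:
the number of orbits on `Fin k` of the subgroup generated by `(σ⁽⁰⁾)⁻¹ ∘ σ⁽ᶜ⁾`, `1 ≤ c ≤ D`. -/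
noncomputable def compCount {k D : ℕ} (σ : Fin (D + 1) → Equiv.Perm (Fin k)) : ℕ :=
  Nat.card (MulAction.orbitRel.Quotient
    (Subgroup.closure
      {g : Equiv.Perm (Fin k) | ∃ c : Fin (D + 1), c ≠ 0 ∧ g = (σ 0)⁻¹ * σ c}) (Fin k))

/-- Face count of the jacket associated to the cyclic color permutation `π`:
`F_π(σ) = Σ_{q=0}^{D} c(σ^{(π^q(0))} ∘ (σ^{(π^{q+1}(0))})⁻¹)`. -/
noncomputable def jacketFaceCount {k D : ℕ} (σ : Fin (D + 1) → Equiv.Perm (Fin k))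
    (π : Equiv.Perm (Fin (D + 1))) : ℕ :=
  ∑ q ∈ Finset.range (D + 1),
    cycleCount (σ ((π ^ q) 0) * (σ ((π ^ (q + 1)) 0))⁻¹)

namespace Equiv.Perm

variable {α : Type*} [Fintype α] [DecidableEq α]

lemma isCycle_and_support_eq_univ_iff_cycleType (π : Perm α) :
    π.IsCycle ∧ π.support = Finset.univ ↔ π.cycleType = {Fintype.card α} := by
  constructor
  · rintro ⟨hc, hs⟩
    rw [hc.cycleType, hs, Finset.card_univ]
  · intro hπ
    refine ⟨card_cycleType_eq_one.mp (by simp [hπ]), ?_⟩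
    rw [← Finset.card_eq_iff_eq_univ, ← sum_cycleType, hπ, Multiset.sum_singleton]

lemma card_cycleType_card (h : 2 ≤ Fintype.card α) :
    (Finset.univ.filter fun π : Perm α => π.cycleType = {Fintype.card α}).card =
      (Fintype.card α - 1).factorial := by
  simpa using card_of_cycleType_singleton (α := α) h le_rfl

lemma apply_ne_self_of_cycleType_card {π : Perm α}
    (hπ : π.cycleType = {Fintype.card α}) (a : α) : π a ≠ a := by
  rw [← mem_support, ((isCycle_and_support_eq_univ_iff_cycleType π).mpr hπ).2]
  exact Finset.mem_univ a

/-- Conjugation by a transposition shows that the number of permutations of a given cycle type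
sending `a` to `b` does not depend on `b ≠ a`. -/
lemma card_cycleType_apply_eq_congr (m : Multiset ℕ) {a b c : α} (hb : b ≠ a) (hc : c ≠ a) :
    (Finset.univ.filter fun π : Perm α => π.cycleType = m ∧ π a = b).card =
      (Finset.univ.filter fun π : Perm α => π.cycleType = m ∧ π a = c).card := by
  refine Finset.card_equiv (MulAut.conj (swap b c)).toEquiv fun π => ?_
  have ha : swap b c a = a := swap_apply_of_ne_of_ne hb.symm hc.symm
  have hconj : (swap b c * π * (swap b c)⁻¹) a = c ↔ π a = b := by
    rw [swap_inv, mul_apply, mul_apply, ha, swap_apply_eq_iff, swap_apply_right]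
  simp [-swap_inv, -coe_mul, cycleType_conj, hconj]

lemma card_full_cycles_apply_eq (h : 2 ≤ Fintype.card α) {a b : α} (hab : b ≠ a) :
    (Finset.univ.filter fun π : Perm α =>
      π.cycleType = {Fintype.card α} ∧ π a = b).card = (Fintype.card α - 2).factorial := by
  have hsum := Finset.card_eq_sum_card_fiberwise (f := fun π : Perm α => π a)
    (s := Finset.univ.filter fun π : Perm α => π.cycleType = {Fintype.card α})
    (t := Finset.univ.erase a) (fun π hπ => by
      simpa using apply_ne_self_of_cycleType_card (by simpa using hπ) a)
  simp only [Finset.filter_filter] at hsum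
  rw [card_cycleType_card h, Finset.sum_congr rfl fun c hc =>
    card_cycleType_apply_eq_congr _ (Finset.ne_of_mem_erase hc) hab] at hsum
  rw [Finset.sum_const, Finset.card_erase_of_mem (Finset.mem_univ a), Finset.card_univ,
    smul_eq_mul] at hsum
  obtain ⟨n, hn⟩ := Nat.exists_eq_add_of_le' h
  rw [hn] at hsum ⊢
  exact (Nat.eq_of_mul_eq_mul_left n.succ_pos hsum).symm

lemma sum_full_cycles_sum_apply {M : Type*} [AddCommMonoid M] (h : 2 ≤ Fintype.card α)
    (g : α → α → M) :
    ∑ π : Perm α with π.cycleType = {Fintype.card α}, ∑ a, g a (π a) =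
      (Fintype.card α - 2).factorial • ∑ a, ∑ b ∈ Finset.univ.erase a, g a b := by
  rw [Finset.sum_comm, Finset.smul_sum]
  refine Finset.sum_congr rfl fun a _ => ?_
  rw [← Finset.sum_fiberwise_of_maps_to (g := fun π : Perm α => π a)
    (t := Finset.univ.erase a) (fun π hπ => by
      simpa using apply_ne_self_of_cycleType_card (by simpa using hπ) a), Finset.smul_sum]
  refine Finset.sum_congr rfl fun b hb => ?_
  rw [← card_full_cycles_apply_eq h (Finset.ne_of_mem_erase hb), Finset.filter_filter,
    ← Finset.sum_const]
  exact Finset.sum_congr rfl fun π hπ => by rw [(Finset.mem_filter.mp hπ).2.2]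

lemma sum_range_pow_apply_of_isCycle {M : Type*} [AddCommMonoid M] {π : Perm α}
    (hc : π.IsCycle) (hs : π.support = Finset.univ) (x : α) (f : α → M) :
    ∑ q ∈ Finset.range (Fintype.card α), f ((π ^ q) x) = ∑ a, f a := by
  have himage : (Finset.range (Fintype.card α)).image (fun q => (π ^ q) x) = Finset.univ := by
    refine Finset.eq_univ_of_forall fun y => ?_
    have hmem (z : α) : π z ≠ z := by rw [← mem_support, hs]; exact Finset.mem_univ z
    obtain ⟨q, hq, hy⟩ := (hc.sameCycle (hmem x) (hmem y)).exists_pow_eq_of_mem_support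
      (mem_support.mpr (hmem x))
    rw [hc.cycleOf_eq (hmem x), hs, Finset.card_univ] at hq
    exact Finset.mem_image.mpr ⟨q, Finset.mem_range.mpr hq, hy⟩
  have hinj : Set.InjOn (fun q => (π ^ q) x) (Finset.range (Fintype.card α)) := by
    rw [← Finset.card_image_iff, himage, Finset.card_univ, Finset.card_range]
  rw [← himage, Finset.sum_image hinj]

end Equiv.Perm

lemma sum_erase_eq_two_mul_sum_lt {α : Type*} [Fintype α] [LinearOrder α] (g : α → α → ℕ)
    (hg : ∀ a b, g a b = g b a) :
    ∑ a, ∑ b ∈ Finset.univ.erase a, g a b =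
      2 * ∑ p : α × α with p.1 < p.2, g p.1 p.2 := by
  have hsplit (a : α) : ∑ b ∈ Finset.univ.erase a, g a b =
      (∑ b, if a < b then g a b else 0) + ∑ b, if b < a then g a b else 0 := by
    rw [← Finset.sum_add_distrib, ← Finset.filter_ne', Finset.sum_filter]
    refine Finset.sum_congr rfl fun b _ => ?_
    rcases lt_trichotomy a b with h | rfl | h
    · simp [h, h.ne', h.not_gt]
    · simp
    · simp [h, h.ne, h.not_gt]
  simp only [hsplit]
  rw [Finset.sum_add_distrib, Finset.sum_comm (f := fun a b => if b < a then g a b else 0),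
    Finset.sum_filter, Fintype.sum_prod_type, two_mul]
  simp only [fun a b => hg b a]

lemma cycleCount_inv {k : ℕ} (τ : Equiv.Perm (Fin k)) : cycleCount τ⁻¹ = cycleCount τ := by
  unfold cycleCount
  rw [Subgroup.zpowers_inv]

open scoped Classical in
/-- Summing the jacket face counts over all cyclic permutations of the colors recovers
the total face count: `Σ_π F_π(σ) = 2·(D−1)!·F(σ)`. -/
theorem sum_jacket_faces (k D : ℕ) (hk : 1 ≤ k) (hD : 2 ≤ D)
    (σ : Fin (D + 1) → Equiv.Perm (Fin k)) :
    ∑ π ∈ Finset.univ.filter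
        (fun π : Equiv.Perm (Fin (D + 1)) => π.IsCycle ∧ π.support = Finset.univ),
      jacketFaceCount σ π = 2 * Nat.factorial (D - 1) * faceCount σ := by
  have hcard : 2 ≤ Fintype.card (Fin (D + 1)) := by rw [Fintype.card_fin]; omega
  let g (a b : Fin (D + 1)) : ℕ := cycleCount (σ a * (σ b)⁻¹)
  have hg (a b : Fin (D + 1)) : g a b = g b a := by
    simp only [g]
    rw [← cycleCount_inv, mul_inv_rev, inv_inv]
  have hjacket (π : Equiv.Perm (Fin (D + 1))) (hπ : π.IsCycle ∧ π.support = Finset.univ) :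
      jacketFaceCount σ π = ∑ a, g a (π a) := by
    rw [← Equiv.Perm.sum_range_pow_apply_of_isCycle hπ.1 hπ.2 0, Fintype.card_fin]
    simp only [jacketFaceCount, g, pow_succ', Equiv.Perm.mul_apply]
  rw [Finset.sum_congr rfl fun π hπ => hjacket π (Finset.mem_filter.mp hπ).2]
  simp only [Equiv.Perm.isCycle_and_support_eq_univ_iff_cycleType]
  have key := Equiv.Perm.sum_full_cycles_sum_apply hcard g
  rw [sum_erase_eq_two_mul_sum_lt g hg, smul_eq_mul, Fintype.card_fin] at key
  have hsub : D + 1 - 2 = D - 1 := by omega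
  rw [hsub] at key
  rw [mul_comm 2, mul_assoc]
  simpa only [Fintype.card_fin, faceCount, g] using key
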